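/- arXiv:2201.07608 — 3 statements merged into one kernel-verified Lean document; each statement's English description precedes it below -/
import Mathlib

section
/- Let T > 0, let η : ℝ×[0,T] → (0,∞) be C¹ and 1-periodic in x, and let v = (v₁,v₂) be C¹ on the closed moving domain {(x,z,t) : 0 ≤ z ≤ η(x,t)}, 1-periodic in x, satisfying div v = ∂ₓv₁ + ∂_z v₂ = 0 on Ω_η(t), v(x,0,t) = 0, and v(x, η(x,t), t) = (0, ∂_tη(x,t)). Then for every 1-periodic C¹ function φ : ℝ → ℝ and every t ∈ [0,T]: | ∫₀¹ ∂_tη(x,t)·φ(x) dx | ≤ ( sup_x η(x,t) )^{1/2} · ( ∫_{Ω_η(t)} v₁² dx dz )^{1/2} · ( ∫₀¹ (φ'(x))² dx )^{1/2}. -/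
open MeasureTheory Set intervalIntegral

/-!
For fixed `t`, let `F x = ∫₀^η v₁ dz` be the flux through the vertical section above `x`. The
Leibniz rule, incompressibility and the boundary conditions give `∂ₓF = -∂ₜη`. Integrating by parts
over a period moves the derivative onto `φ`, and Cauchy–Schwarz bounds
`|∫₀¹ ∂ₜη φ| = |∫₀¹ F φ'|` by `‖F‖₂ ‖φ'‖₂`. A second Cauchy–Schwarz, on each vertical section,
gives `F² ≤ η ∫₀^η v₁² dz`.
-/

section CauchySchwarz

theorem memLp_restrict_of_continuousOn_of_isCompact {X E : Type*} [TopologicalSpace X] [T2Space X]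
    [TopologicalSpace.PseudoMetrizableSpace X] [MeasurableSpace X] [OpensMeasurableSpace X]
    [NormedAddCommGroup E] {μ : Measure X} [IsFiniteMeasureOnCompacts μ] {f : X → E} {s : Set X}
    (hs : IsCompact s) (hf : ContinuousOn f s) (p : ENNReal) : MemLp f p (μ.restrict s) := by
  obtain ⟨C, hC⟩ := hs.exists_bound_of_continuousOn hf
  have : IsFiniteMeasure (μ.restrict s) := ⟨by simpa using hs.measure_lt_top⟩
  exact .of_bound (hf.aestronglyMeasurable_of_isCompact hs hs.measurableSet) C
    (ae_restrict_of_forall_mem hs.measurableSet hC)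

theorem abs_integral_mul_le_sqrt_mul_sqrt {α : Type*} [MeasurableSpace α] {μ : Measure α}
    {f g : α → ℝ} (hf : MemLp f 2 μ) (hg : MemLp g 2 μ) :
    |∫ x, f x * g x ∂μ| ≤ √(∫ x, f x ^ 2 ∂μ) * √(∫ x, g x ^ 2 ∂μ) := by
  have holder := integral_mul_norm_le_Lp_mul_Lq (μ := μ) Real.HolderConjugate.two_two
    (by simpa using hf) (by simpa using hg)
  calc |∫ x, f x * g x ∂μ|
    _ ≤ ∫ x, ‖f x‖ * ‖g x‖ ∂μ := by
      simpa only [Real.norm_eq_abs, abs_mul] using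
        norm_integral_le_integral_norm (μ := μ) fun x ↦ f x * g x
    _ ≤ √(∫ x, f x ^ 2 ∂μ) * √(∫ x, g x ^ 2 ∂μ) := by
      simpa [Real.sqrt_eq_rpow] using holder

variable {a b : ℝ}

theorem abs_intervalIntegral_mul_le_sqrt_mul_sqrt (hab : a ≤ b) {f g : ℝ → ℝ}
    (hf : ContinuousOn f (Icc a b)) (hg : ContinuousOn g (Icc a b)) :
    |∫ x in a..b, f x * g x| ≤ √(∫ x in a..b, f x ^ 2) * √(∫ x in a..b, g x ^ 2) := by
  simp only [integral_of_le hab, ← integral_Icc_eq_integral_Ioc]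
  exact abs_integral_mul_le_sqrt_mul_sqrt
    (memLp_restrict_of_continuousOn_of_isCompact isCompact_Icc hf 2)
    (memLp_restrict_of_continuousOn_of_isCompact isCompact_Icc hg 2)

theorem sq_intervalIntegral_le_sub_mul (hab : a ≤ b) {f : ℝ → ℝ} (hf : ContinuousOn f (Icc a b)) :
    (∫ x in a..b, f x) ^ 2 ≤ (b - a) * ∫ x in a..b, f x ^ 2 := by
  have hlen : 0 ≤ b - a := sub_nonneg.2 hab
  have hsq : 0 ≤ ∫ x in a..b, f x ^ 2 := integral_nonneg hab fun x _ ↦ sq_nonneg (f x)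
  have cauchySchwarz : |∫ x in a..b, f x| ≤ √(b - a) * √(∫ x in a..b, f x ^ 2) := by
    simpa using abs_intervalIntegral_mul_le_sqrt_mul_sqrt hab (f := fun _ ↦ 1)
      continuousOn_const hf
  rwa [← Real.sqrt_mul hlen, Real.le_sqrt (abs_nonneg _) (mul_nonneg hlen hsq), sq_abs]
    at cauchySchwarz

theorem abs_integral_deriv_mul_le_sqrt_mul_sqrt (hab : a ≤ b) {F F' φ φ' : ℝ → ℝ}
    (hF : ∀ x ∈ Icc a b, HasDerivAt F (F' x) x) (hφ : ∀ x ∈ Icc a b, HasDerivAt φ (φ' x) x)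
    (hF' : IntervalIntegrable F' volume a b) (hφ' : ContinuousOn φ' (Icc a b))
    (hends : F b * φ b = F a * φ a) :
    |∫ x in a..b, F' x * φ x| ≤ √(∫ x in a..b, F x ^ 2) * √(∫ x in a..b, φ' x ^ 2) := by
  have parts : ∫ x in a..b, F x * φ' x = -∫ x in a..b, F' x * φ x := by
    rw [integral_mul_deriv_eq_deriv_mul (uIcc_of_le hab ▸ hF) (uIcc_of_le hab ▸ hφ) hF'
      (hφ'.intervalIntegrable_of_Icc hab), hends, sub_self, zero_sub]
  rw [← abs_neg, ← parts]
  exact abs_intervalIntegral_mul_le_sqrt_mul_sqrt hab (HasDerivAt.continuousOn hF) hφ'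

end CauchySchwarz

section Leibniz

variable {E : Type*} [NormedAddCommGroup E] [NormedSpace ℝ E] {f f' : ℝ → ℝ → E}

theorem hasDerivAt_intervalIntegral_of_continuous (hf : ∀ x, Continuous (f x))
    (hf' : Continuous f'.uncurry) (hderiv : ∀ x z, HasDerivAt (f · z) (f' x z) x) (a b x : ℝ) :
    HasDerivAt (fun y ↦ ∫ z in a..b, f y z) (∫ z in a..b, f' x z) x := by
  obtain ⟨C, hC⟩ := ((isCompact_closedBall x 1).prod (isCompact_uIcc (a := a) (b := b)))
    |>.exists_bound_of_continuousOn hf'.continuousOn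
  exact (hasDerivAt_integral_of_dominated_loc_of_deriv_le (bound := fun _ ↦ C)
    (Metric.closedBall_mem_nhds x one_pos)
    (.of_forall fun y ↦ (hf y).aestronglyMeasurable) ((hf x).intervalIntegrable _ _)
    (hf'.uncurry_left x).aestronglyMeasurable
    (.of_forall fun z hz y hy ↦ hC (y, z) ⟨hy, uIoc_subset_uIcc hz⟩) intervalIntegrable_const
    (.of_forall fun z _ y _ ↦ hderiv y z)).2

theorem hasDerivAt_intervalIntegral_upper_of_continuous [CompleteSpace E]
    (hf : Continuous f.uncurry) (hf' : Continuous f'.uncurry)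
    (hderiv : ∀ x z, HasDerivAt (f · z) (f' x z) x) (a : ℝ) {h : ℝ → ℝ} {h' x : ℝ}
    (hh : HasDerivAt h h' x) :
    HasDerivAt (fun y ↦ ∫ z in a..h y, f y z)
      ((∫ z in a..h x, f' x z) + h' • f x (h x)) x := by
  have spanSingleton := (ContinuousLinearMap.toSpanSingletonCLE (𝕜 := ℝ) (E := E)).continuous
  have total := hasStrictFDerivAt_uncurry_coprod (𝕜 := ℝ) (u := (x, h x))
    (f := fun y b ↦ ∫ z in a..b, f y z)
    (f₁ := fun y b ↦ .toSpanSingleton ℝ (∫ z in a..b, f' y z))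
    (f₂ := fun y b ↦ .toSpanSingleton ℝ (f y b))
    (.of_forall fun p ↦ hasDerivAt_intervalIntegral_of_continuous
      hf.uncurry_left hf' hderiv a p.2 p.1)
    (.of_forall fun p ↦ ((hf.uncurry_left p.1).integral_hasStrictDerivAt a p.2).hasDerivAt)
    (spanSingleton.comp (continuous_parametric_primitive_of_continuous hf')).continuousAt
    (spanSingleton.comp hf).continuousAt
  simpa [Function.HasUncurry.uncurry, Function.comp_def] using
    total.hasFDerivAt.comp_hasDerivAt x ((hasDerivAt_id x).prodMk hh)

end Leibniz

section Flux

/-- The flux at abscissa `x` of a planar flow with horizontal velocity `u` through the vertical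
section `0 < z < h x` of the subgraph of `h`. The velocity is taken in curried form `u x z`. -/
noncomputable def horizontalFlux (u : ℝ → ℝ → ℝ) (h : ℝ → ℝ) (x : ℝ) : ℝ :=
  ∫ z in 0..h x, u x z

variable {u u' w : ℝ → ℝ → ℝ} {h : ℝ → ℝ}

theorem continuous_horizontalFlux (hu : Continuous u.uncurry) (hh : Continuous h) :
    Continuous (horizontalFlux u h) :=
  continuous_parametric_intervalIntegral_of_continuous hu hh

theorem hasDerivAt_horizontalFlux (hu : Continuous u.uncurry) (hu' : Continuous u'.uncurry)
    (hderiv : ∀ x z, HasDerivAt (u · z) (u' x z) x) {h' x : ℝ} (hh : HasDerivAt h h' x)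
    (hx : 0 ≤ h x) (hw : ContinuousOn (w x) (Icc 0 (h x)))
    (hdiv : ∀ z ∈ Ioo 0 (h x), HasDerivAt (w x) (-u' x z) z) :
    HasDerivAt (horizontalFlux u h) (w x 0 - w x (h x) + h' * u x (h x)) x := by
  have hint : ∫ z in 0..h x, u' x z = w x 0 - w x (h x) := by
    rw [← neg_sub, ← integral_eq_sub_of_hasDerivAt_of_le hx hw hdiv
      ((hu'.uncurry_left x).neg.intervalIntegrable _ _), intervalIntegral.integral_neg, neg_neg]
  have leibniz := hasDerivAt_intervalIntegral_upper_of_continuous hu hu' hderiv 0 hh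
  rw [hint] at leibniz
  exact leibniz

theorem integral_sq_horizontalFlux_le {a b M : ℝ} (hab : a ≤ b) (hu : Continuous u.uncurry)
    (hh : Continuous h) (hnonneg : ∀ x ∈ Icc a b, 0 ≤ h x) (hM : ∀ x ∈ Icc a b, h x ≤ M) :
    ∫ x in a..b, horizontalFlux u h x ^ 2 ≤ M * ∫ x in a..b, ∫ z in 0..h x, u x z ^ 2 := by
  have hu2 : Continuous (horizontalFlux (fun x z ↦ u x z ^ 2) h) :=
    continuous_horizontalFlux (hu.pow 2) hh
  rw [← intervalIntegral.integral_const_mul]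
  refine integral_mono_on hab (((continuous_horizontalFlux hu hh).pow 2).intervalIntegrable _ _)
    ((hu2.const_mul M).intervalIntegrable _ _) fun x hx ↦ ?_
  calc horizontalFlux u h x ^ 2
    _ ≤ h x * ∫ z in 0..h x, u x z ^ 2 := by
      simpa only [horizontalFlux, sub_zero] using
        sq_intervalIntegral_le_sub_mul (hnonneg x hx) (hu.uncurry_left x).continuousOn
    _ ≤ M * ∫ z in 0..h x, u x z ^ 2 :=
      mul_le_mul_of_nonneg_right (hM x hx)
        (integral_nonneg (hnonneg x hx) fun z _ ↦ sq_nonneg (u x z))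

theorem hasDerivAt_horizontalFlux_of_kinematic {t x : ℝ} {η : ℝ × ℝ → ℝ} {v1 v2 : ℝ × ℝ × ℝ → ℝ}
    (hη : DifferentiableAt ℝ η (x, t)) (hnonneg : 0 ≤ η (x, t))
    (hv1 : ContDiff ℝ 1 v1) (hv2 : Differentiable ℝ v2)
    (hdiv : ∀ z ∈ Ioo 0 (η (x, t)),
      fderiv ℝ v1 (x, z, t) (1, 0, 0) + fderiv ℝ v2 (x, z, t) (0, 1, 0) = 0)
    (hbottom : v2 (x, 0, t) = 0)
    (hkin : v2 (x, η (x, t), t)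
      = fderiv ℝ η (x, t) (0, 1) + v1 (x, η (x, t), t) * fderiv ℝ η (x, t) (1, 0)) :
    HasDerivAt (horizontalFlux (fun x z ↦ v1 (x, z, t)) fun x ↦ η (x, t))
      (-fderiv ℝ η (x, t) (0, 1)) x := by
  have hv1c := hv1.continuous
  have hv2c := hv2.continuous
  have hv1_x_cont : Continuous (fun x z ↦ fderiv ℝ v1 (x, z, t) (1, 0, 0)).uncurry :=
    ((hv1.continuous_fderiv one_ne_zero).comp (by fun_prop)).clm_apply continuous_const
  have hη_x : HasDerivAt (fun x ↦ η (x, t)) (fderiv ℝ η (x, t) (1, 0)) x :=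
    hη.hasFDerivAt.comp_hasDerivAt x ((hasDerivAt_id x).prodMk (hasDerivAt_const x t))
  have hv1_x (x z : ℝ) : HasDerivAt (fun x ↦ v1 (x, z, t)) (fderiv ℝ v1 (x, z, t) (1, 0, 0)) x :=
    (hv1.differentiable one_ne_zero _).hasFDerivAt.comp_hasDerivAt x
      ((hasDerivAt_id x).prodMk (hasDerivAt_const x (z, t)))
  have hv2_z (z : ℝ) : HasDerivAt (fun z ↦ v2 (x, z, t)) (fderiv ℝ v2 (x, z, t) (0, 1, 0)) z :=
    (hv2 _).hasFDerivAt.comp_hasDerivAt z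
      ((hasDerivAt_const z x).prodMk ((hasDerivAt_id z).prodMk (hasDerivAt_const z t)))
  have flux := hasDerivAt_horizontalFlux (w := fun x z ↦ v2 (x, z, t))
    (by fun_prop) hv1_x_cont hv1_x hη_x hnonneg (by fun_prop)
    fun z hz ↦ (hv2_z z).congr_deriv (eq_neg_of_add_eq_zero_right (hdiv z hz))
  refine flux.congr_deriv ?_
  rw [hbottom, hkin]
  ring

end Flux

/-- The duality estimate for a fluid that may slip along the bottom and along the moving surface. -/
theorem stmt_14_general {t : ℝ} {η : ℝ × ℝ → ℝ} (hη : ContDiff ℝ 1 η)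
    (hηper : ∀ x, η (x + 1, t) = η (x, t)) (hnonneg : ∀ x, 0 ≤ η (x, t))
    {v1 v2 : ℝ × ℝ × ℝ → ℝ} (hv1 : ContDiff ℝ 1 v1) (hv2 : Differentiable ℝ v2)
    (hvper : ∀ x z, v1 (x + 1, z, t) = v1 (x, z, t))
    (hdiv : ∀ x, ∀ z ∈ Ioo 0 (η (x, t)),
      fderiv ℝ v1 (x, z, t) (1, 0, 0) + fderiv ℝ v2 (x, z, t) (0, 1, 0) = 0)
    (hbottom : ∀ x, v2 (x, 0, t) = 0)
    (hkin : ∀ x, v2 (x, η (x, t), t)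
      = fderiv ℝ η (x, t) (0, 1) + v1 (x, η (x, t), t) * fderiv ℝ η (x, t) (1, 0))
    {φ : ℝ → ℝ} (hφ : ContDiff ℝ 1 φ) (hφper : ∀ x, φ (x + 1) = φ x) :
    |∫ x in (0:ℝ)..1, fderiv ℝ η (x, t) (0, 1) * φ x|
      ≤ √(⨆ x : Icc (0:ℝ) 1, η (x.1, t))
        * √(∫ x in (0:ℝ)..1, ∫ z in (0:ℝ)..(η (x, t)), (v1 (x, z, t)) ^ 2)
        * √(∫ x in (0:ℝ)..1, (deriv φ x) ^ 2) := by
  have hηc := hη.continuous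
  have hv1c := hv1.continuous
  have hη_t : Continuous fun x ↦ fderiv ℝ η (x, t) (0, 1) :=
    ((hη.continuous_fderiv one_ne_zero).comp (by fun_prop)).clm_apply continuous_const
  set F := horizontalFlux (fun x z ↦ v1 (x, z, t)) fun x ↦ η (x, t) with hF
  have hF_deriv (x : ℝ) : HasDerivAt F (-fderiv ℝ η (x, t) (0, 1)) x :=
    hasDerivAt_horizontalFlux_of_kinematic (hη.differentiable one_ne_zero _) (hnonneg x) hv1 hv2
      (hdiv x) (hbottom x) (hkin x)
  have hF_per (x : ℝ) : F (x + 1) = F x := by simp only [hF, horizontalFlux, hηper, hvper]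
  have hends : F 1 * φ 1 = F 0 * φ 0 := by rw [← zero_add 1, hF_per, hφper]
  have duality := abs_integral_deriv_mul_le_sqrt_mul_sqrt zero_le_one (fun x _ ↦ hF_deriv x)
    (fun x _ ↦ (hφ.differentiable one_ne_zero x).hasDerivAt)
    (hη_t.neg.intervalIntegrable _ _) (hφ.continuous_deriv le_rfl).continuousOn hends
  have hη_le (x : ℝ) (hx : x ∈ Icc 0 1) : η (x, t) ≤ ⨆ y : Icc (0:ℝ) 1, η (y.1, t) :=
    le_ciSup (f := fun y : Icc (0:ℝ) 1 ↦ η (y.1, t))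
      (isCompact_range (by fun_prop)).bddAbove ⟨x, hx⟩
  have hF_sq := integral_sq_horizontalFlux_le zero_le_one (u := fun x z ↦ v1 (x, z, t))
    (by fun_prop) (by fun_prop) (fun x _ ↦ hnonneg x) hη_le
  simp only [neg_mul, intervalIntegral.integral_neg, abs_neg] at duality
  rw [← Real.sqrt_mul (Real.iSup_nonneg fun x : Icc (0:ℝ) 1 ↦ hnonneg x)]
  exact duality.trans (by gcongr)

/-- duality estimate at the core of Proposition 4.1, the uniform
`L²(0,T;H⁻¹)` bound on `∂ₜη`. Under incompressibility, no-slip and the kinematic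
condition, for every 1-periodic C¹ test function `φ` and every `t ∈ [0,T]`,
`|∫₀¹ ∂ₜη(x,t) φ(x) dx| ≤ (sup_x η(x,t))^{1/2} (∫_{Ω_η(t)} v₁²)^{1/2} (∫₀¹ (φ')²)^{1/2}`. -/
theorem stmt_14 (T : ℝ) (hT : 0 < T)
    (η : ℝ × ℝ → ℝ) (hη : ContDiff ℝ 1 η)
    (hηper : ∀ x t, η (x + 1, t) = η (x, t))
    (hpos : ∀ x t, t ∈ Icc (0:ℝ) T → 0 < η (x, t))
    (v1 v2 : ℝ × ℝ × ℝ → ℝ) (hv1 : ContDiff ℝ 1 v1) (hv2 : ContDiff ℝ 1 v2)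
    (hvper : ∀ x z t, v1 (x + 1, z, t) = v1 (x, z, t) ∧ v2 (x + 1, z, t) = v2 (x, z, t))
    (hdiv : ∀ x z t, t ∈ Icc (0:ℝ) T → z ∈ Ioo 0 (η (x, t)) →
      fderiv ℝ v1 (x, z, t) (1, 0, 0) + fderiv ℝ v2 (x, z, t) (0, 1, 0) = 0)
    (hnoslip : ∀ x t, t ∈ Icc (0:ℝ) T → v1 (x, 0, t) = 0 ∧ v2 (x, 0, t) = 0)
    (hkin : ∀ x t, t ∈ Icc (0:ℝ) T →
      v1 (x, η (x, t), t) = 0 ∧ v2 (x, η (x, t), t) = fderiv ℝ η (x, t) (0, 1))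
    (φ : ℝ → ℝ) (hφ : ContDiff ℝ 1 φ) (hφper : ∀ x, φ (x + 1) = φ x) :
    ∀ t ∈ Icc (0:ℝ) T,
      |∫ x in (0:ℝ)..1, fderiv ℝ η (x, t) (0, 1) * φ x|
        ≤ Real.sqrt (⨆ x : Icc (0:ℝ) 1, η (x.1, t))
          * Real.sqrt (∫ x in (0:ℝ)..1, ∫ z in (0:ℝ)..(η (x, t)), (v1 (x, z, t)) ^ 2)
          * Real.sqrt (∫ x in (0:ℝ)..1, (deriv φ x) ^ 2) := by
  intro t ht
  exact stmt_14_general hη (hηper · t) (fun x ↦ (hpos x t ht).le) hv1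
    (hv2.differentiable one_ne_zero) (fun x z ↦ (hvper x z t).1) (fun x z ↦ hdiv x z t ht)
    (fun x ↦ (hnoslip x t ht).2) (fun x ↦ by simp [hkin x t ht]) hφ hφper
end

section
/- Let β > 0, T > 0, and let Φ : ℝ×[0,T] → ℝ be smooth and 1-periodic in x. Suppose h₁, h₂ : ℝ×[0,T] → (0,∞) are smooth, 1-periodic in x, bounded below by positive constants, both satisfy the sixth-order thin-film equation ∂_t h = ∂ₓ( h³·( (β/12)·∂ₓ⁵h − Φ ) ) on ℝ×(0,T), and have the same initial data h₁(·,0) = h₂(·,0). Then h₁ = h₂ on ℝ×[0,T]. -/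
open MeasureTheory Set

noncomputable section

/-- Partial derivative in `x` of a field on `ℝ×ℝ` (variables `(x,t)`), as an operator
(so that it can be iterated). -/
def pdx (f : ℝ × ℝ → ℝ) : ℝ × ℝ → ℝ := fun q => fderiv ℝ f q (1, 0)

/-- Partial derivative in `t` of a field on `ℝ×ℝ` (variables `(x,t)`). -/
def pdt (f : ℝ × ℝ → ℝ) : ℝ × ℝ → ℝ := fun q => fderiv ℝ f q (0, 1)

/-! Both fluxes share the potential `Φ`, so their difference is affine in the top derivative of
`w = h₁ - h₂`: the difference solves the linear equation `∂ₜw = ∂ₓ(a ∂ₓ⁵w + k w)` with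
`a = b h₁ⁿ > 0`. Testing it against `w + ∂ₓ⁴w` and integrating by parts over one period gives

  `d/dt ∫ (w² + (∂ₓ²w)²) = -2 ∫ (∂ₓw + ∂ₓ⁵w) (a ∂ₓ⁵w + k w)`.

Completing the square removes `∂ₓ⁵w` from the right-hand side at the cost of `w²` and `(∂ₓw)²`,
and `∫ (∂ₓw)² = -∫ w ∂ₓ²w` is controlled by the energy, so Grönwall's inequality applies. -/

open Function
open scoped ContDiff

section Gronwall

theorem nonpos_of_hasDerivAt_le_mul {E E' : ℝ → ℝ} {a b K : ℝ} (hE : ContinuousOn E (Icc a b))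
    (hE' : ∀ t ∈ Ioo a b, HasDerivAt E (E' t) t) (hK : ∀ t ∈ Ioo a b, E' t ≤ K * E t)
    (ha : E a ≤ 0) : ∀ t ∈ Icc a b, E t ≤ 0 := by
  intro t ht
  have hderiv (s : ℝ) (hs : s ∈ Ioo a b) :
      HasDerivAt (fun s => E s * Real.exp (-K * s)) ((E' s - K * E s) * Real.exp (-K * s)) s := by
    have hexp := ((hasDerivAt_id s).const_mul (-K)).exp
    exact ((hE' s hs).mul hexp).congr_deriv (by simp only [id]; ring)
  have hanti : AntitoneOn (fun s => E s * Real.exp (-K * s)) (Icc a b) := by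
    refine antitoneOn_of_hasDerivWithinAt_nonpos (convex_Icc a b) (by fun_prop)
      (f' := fun s => (E' s - K * E s) * Real.exp (-K * s)) ?_ ?_ <;>
      rw [interior_Icc] <;> intro s hs
    · exact (hderiv s hs).hasDerivWithinAt
    · exact mul_nonpos_of_nonpos_of_nonneg (sub_nonpos.2 (hK s hs)) (Real.exp_nonneg _)
  have hle : E t * Real.exp (-K * t) ≤ E a * Real.exp (-K * a) :=
    hanti (left_mem_Icc.2 (ht.1.trans ht.2)) ht ht.1
  exact nonpos_of_mul_nonpos_left
    (hle.trans (mul_nonpos_of_nonpos_of_nonneg ha (Real.exp_nonneg _))) (Real.exp_pos _)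

end Gronwall

section PartialDerivatives

variable {f g : ℝ × ℝ → ℝ}

theorem hasDerivAt_pdx {x t : ℝ} (hf : DifferentiableAt ℝ f (x, t)) :
    HasDerivAt (fun y => f (y, t)) (pdx f (x, t)) x :=
  hf.hasFDerivAt.comp_hasDerivAt x ((hasDerivAt_id x).prodMk (hasDerivAt_const x t))

theorem hasDerivAt_pdt {x t : ℝ} (hf : DifferentiableAt ℝ f (x, t)) :
    HasDerivAt (fun s => f (x, s)) (pdt f (x, t)) t :=
  hf.hasFDerivAt.comp_hasDerivAt t ((hasDerivAt_const t x).prodMk (hasDerivAt_id t))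

theorem contDiff_pdx {m n : ℕ∞ω} (hf : ContDiff ℝ n f) (hmn : m + 1 ≤ n) :
    ContDiff ℝ m (pdx f) :=
  (hf.fderiv_right hmn).clm_apply contDiff_const

theorem contDiff_pdt {m n : ℕ∞ω} (hf : ContDiff ℝ n f) (hmn : m + 1 ≤ n) :
    ContDiff ℝ m (pdt f) :=
  (hf.fderiv_right hmn).clm_apply contDiff_const

theorem contDiff_iterate_pdx (hf : ContDiff ℝ ∞ f) (k : ℕ) : ContDiff ℝ ∞ (pdx^[k] f) :=
  Iterate.rec (fun g => ContDiff ℝ ∞ g) hf (fun _ hg => contDiff_pdx hg le_rfl) k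

theorem periodic_pdx {c : ℝ × ℝ} (hf : Periodic f c) : Periodic (pdx f) c := fun q => by
  rw [pdx, ← fderiv_comp_add_right, hf.funext, pdx]

theorem periodic_pdt {c : ℝ × ℝ} (hf : Periodic f c) : Periodic (pdt f) c := fun q => by
  rw [pdt, ← fderiv_comp_add_right, hf.funext, pdt]

theorem periodic_iterate_pdx {c : ℝ × ℝ} (hf : Periodic f c) (k : ℕ) : Periodic (pdx^[k] f) c :=
  Iterate.rec (fun g => Periodic g c) hf (fun _ hg => periodic_pdx hg) k

theorem pdt_pdx (hf : ContDiff ℝ 2 f) : pdt (pdx f) = pdx (pdt f) := by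
  funext q
  have hd : DifferentiableAt ℝ (fderiv ℝ f) q :=
    (hf.fderiv_right one_add_one_eq_two.le).differentiable one_ne_zero q
  have hsymm : IsSymmSndFDerivAt ℝ f q :=
    hf.contDiffAt.isSymmSndFDerivAt (by rw [minSmoothness_of_isRCLikeNormedField])
  have hsnd (u v : ℝ × ℝ) :
      fderiv ℝ (fun p => fderiv ℝ f p v) q u = fderiv ℝ (fderiv ℝ f) q u v := by
    simp [fderiv_clm_apply hd (differentiableAt_const v)]
  exact (hsnd _ _).trans ((hsymm _ _).trans (hsnd _ _).symm)

theorem pdt_iterate_pdx (hf : ContDiff ℝ ∞ f) (k : ℕ) : pdt (pdx^[k] f) = pdx^[k] (pdt f) := by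
  induction k with
  | zero => rfl
  | succ k ih =>
    rw [iterate_succ_apply', iterate_succ_apply', ← ih,
      pdt_pdx ((contDiff_iterate_pdx hf k).of_le ENat.LEInfty.out)]

theorem pdx_sub (hf : Differentiable ℝ f) (hg : Differentiable ℝ g) :
    pdx (f - g) = pdx f - pdx g := by
  funext q
  simp [pdx, fderiv_sub (hf q) (hg q)]

theorem pdt_sub (hf : Differentiable ℝ f) (hg : Differentiable ℝ g) :
    pdt (f - g) = pdt f - pdt g := by
  funext q
  simp [pdt, fderiv_sub (hf q) (hg q)]

theorem iterate_pdx_sub (hf : ContDiff ℝ ∞ f) (hg : ContDiff ℝ ∞ g) (k : ℕ) :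
    pdx^[k] (f - g) = pdx^[k] f - pdx^[k] g := by
  induction k with
  | zero => rfl
  | succ k ih =>
    simp only [iterate_succ_apply', ih]
    exact pdx_sub ((contDiff_iterate_pdx hf k).differentiable (by simp))
      ((contDiff_iterate_pdx hg k).differentiable (by simp))

theorem iterate_pdx_eq_zero_of_slice {t : ℝ} (hf : ContDiff ℝ ∞ f) (h0 : ∀ x, f (x, t) = 0)
    (k : ℕ) (x : ℝ) : (pdx^[k] f) (x, t) = 0 := by
  induction k generalizing x with
  | zero => exact h0 x
  | succ k ih =>
    rw [iterate_succ_apply']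
    have hd := hasDerivAt_pdx (((contDiff_iterate_pdx hf k).differentiable (by simp)) (x, t))
    simp only [ih] at hd
    exact hd.unique (hasDerivAt_const x 0)

end PartialDerivatives

section SliceIntegrals

variable {f g : ℝ × ℝ → ℝ} {L : ℝ}

theorem intervalIntegrable_slice (hf : Continuous f) (a b t : ℝ) :
    IntervalIntegrable (fun x => f (x, t)) volume a b :=
  (by fun_prop : Continuous fun x : ℝ => f (x, t)).intervalIntegrable a b

theorem hasDerivAt_integral_slice (hf : ContDiff ℝ 1 f) (a b t : ℝ) :
    HasDerivAt (fun s => ∫ x in a..b, f (x, s)) (∫ x in a..b, pdt f (x, t)) t := by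
  have hcont : Continuous (pdt f) := (contDiff_pdt hf (zero_add 1).le).continuous
  obtain ⟨B, hB⟩ := (isCompact_uIcc.prod (isCompact_closedBall t 1)).exists_bound_of_continuousOn
    (hcont.continuousOn (s := uIcc a b ×ˢ Metric.closedBall t 1))
  refine (intervalIntegral.hasDerivAt_integral_of_dominated_loc_of_deriv_le
    (F := fun s x => f (x, s)) (F' := fun s x => pdt f (x, s)) (bound := fun _ => B)
    (Metric.closedBall_mem_nhds t one_pos) ?_ (intervalIntegrable_slice hf.continuous a b t)
    (by fun_prop : Continuous fun x : ℝ => pdt f (x, t)).aestronglyMeasurable ?_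
    intervalIntegrable_const ?_).2
  · exact .of_forall fun s =>
      (hf.continuous.comp (by fun_prop : Continuous fun x : ℝ => (x, s))).aestronglyMeasurable
  · exact .of_forall fun x hx s hs => hB (x, s) ⟨uIoc_subset_uIcc hx, hs⟩
  · exact .of_forall fun x _ s _ => hasDerivAt_pdt (hf.differentiable one_ne_zero (x, s))

theorem hasDerivAt_integral_sq_slice (hf : ContDiff ℝ 1 f) (a b t : ℝ) :
    HasDerivAt (fun s => ∫ x in a..b, f (x, s) ^ 2)
      (2 * ∫ x in a..b, f (x, t) * pdt f (x, t)) t := by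
  have hpdt (x : ℝ) : pdt (fun q => f q ^ 2) (x, t) = 2 * (f (x, t) * pdt f (x, t)) := by
    have hf_t := hasDerivAt_pdt (hf.differentiable one_ne_zero (x, t))
    have hsq_t := hasDerivAt_pdt ((hf.pow 2).differentiable one_ne_zero (x, t))
    rw [hsq_t.unique (hf_t.pow 2)]
    ring
  exact (hasDerivAt_integral_slice (hf.pow 2) a b t).congr_deriv
    (by simp only [hpdt, intervalIntegral.integral_const_mul])

theorem periodic_slice (hf : Periodic f (L, 0)) (t : ℝ) : Periodic (fun x => f (x, t)) L :=
  fun x => by simpa using hf (x, t)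

theorem integral_mul_pdx (hf : ContDiff ℝ 1 f) (hg : ContDiff ℝ 1 g) (hfL : Periodic f (L, 0))
    (hgL : Periodic g (L, 0)) (t : ℝ) :
    ∫ x in 0..L, f (x, t) * pdx g (x, t) = -∫ x in 0..L, pdx f (x, t) * g (x, t) := by
  have hparts := intervalIntegral.integral_mul_deriv_eq_deriv_mul (a := 0) (b := L)
    (fun x _ => hasDerivAt_pdx (hf.differentiable one_ne_zero (x, t)))
    (fun x _ => hasDerivAt_pdx (hg.differentiable one_ne_zero (x, t)))
    (intervalIntegrable_slice (contDiff_pdx hf (zero_add 1).le).continuous 0 L t)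
    (intervalIntegrable_slice (contDiff_pdx hg (zero_add 1).le).continuous 0 L t)
  rw [hparts, (periodic_slice hfL t).eq, (periodic_slice hgL t).eq, sub_self, zero_sub]

theorem integral_mul_iterate_pdx (hf : ContDiff ℝ ∞ f) (hg : ContDiff ℝ ∞ g)
    (hfL : Periodic f (L, 0)) (hgL : Periodic g (L, 0)) (k : ℕ) (t : ℝ) :
    ∫ x in 0..L, f (x, t) * (pdx^[k] g) (x, t)
      = (-1) ^ k * ∫ x in 0..L, (pdx^[k] f) (x, t) * g (x, t) := by
  induction k generalizing g with
  | zero => simp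
  | succ k ih =>
    rw [iterate_succ_apply, ih (contDiff_pdx hg le_rfl) (periodic_pdx hgL),
      integral_mul_pdx ((contDiff_iterate_pdx hf k).of_le ENat.LEInfty.out)
        (hg.of_le ENat.LEInfty.out) (periodic_iterate_pdx hfL k) hgL, iterate_succ_apply', pow_succ]
    ring

end SliceIntegrals

section Energy

/-- The squared `H²` norm over one period of the time slice of `w` at `t`, without the first-order
term, which the two others control. -/
def energy (L : ℝ) (w : ℝ × ℝ → ℝ) (t : ℝ) : ℝ :=
  (∫ x in 0..L, w (x, t) ^ 2) + ∫ x in 0..L, (pdx^[2] w) (x, t) ^ 2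

variable {w F : ℝ × ℝ → ℝ} {L : ℝ}

theorem energy_eq_zero_of_slice {t : ℝ} (hw : ContDiff ℝ ∞ w) (h0 : ∀ x, w (x, t) = 0) :
    energy L w t = 0 := by
  simp [energy, h0, iterate_pdx_eq_zero_of_slice hw h0 2, -iterate_succ]

theorem integral_sq_le_energy (hL : 0 ≤ L) (t : ℝ) :
    ∫ x in 0..L, w (x, t) ^ 2 ≤ energy L w t :=
  le_add_of_nonneg_right (intervalIntegral.integral_nonneg hL fun _ _ => sq_nonneg _)

theorem eq_zero_of_energy_nonpos {t : ℝ} (hL : 0 < L) (hw : Continuous w)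
    (hwL : Periodic w (L, 0)) (hE : energy L w t ≤ 0) (x : ℝ) : w (x, t) = 0 := by
  obtain ⟨y, hy, hxy⟩ := (periodic_slice hwL t).exists_mem_Ico₀ hL x
  rw [hxy]
  by_contra hne
  have hpos : 0 < ∫ x in 0..L, w (x, t) ^ 2 :=
    intervalIntegral.integral_pos hL (by fun_prop) (fun _ _ => sq_nonneg _)
      ⟨y, Ico_subset_Icc_self hy, by positivity⟩
  exact ((integral_sq_le_energy hL.le t).trans hE).not_gt hpos

theorem integral_pdx_sq (hw : ContDiff ℝ ∞ w) (hwL : Periodic w (L, 0)) (t : ℝ) :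
    ∫ x in 0..L, pdx w (x, t) ^ 2 = -∫ x in 0..L, w (x, t) * (pdx^[2] w) (x, t) := by
  have hparts := integral_mul_iterate_pdx hw (contDiff_pdx hw le_rfl) hwL (periodic_pdx hwL) 1 t
  simp only [iterate_one, pow_one, neg_one_mul] at hparts
  simp only [sq, iterate_succ_apply, iterate_zero_apply, hparts, neg_neg]

theorem two_mul_integral_pdx_sq_le_energy (hL : 0 ≤ L) (hw : ContDiff ℝ ∞ w)
    (hwL : Periodic w (L, 0)) (t : ℝ) :
    2 * ∫ x in 0..L, pdx w (x, t) ^ 2 ≤ energy L w t := by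
  have hw₂ := contDiff_iterate_pdx hw 2
  have hw_sq : Continuous fun q => w q ^ 2 := hw.continuous.pow 2
  have hw₂_sq : Continuous fun q => (pdx^[2] w) q ^ 2 := hw₂.continuous.pow 2
  rw [integral_pdx_sq hw hwL, energy, ← intervalIntegral.integral_neg,
    ← intervalIntegral.integral_const_mul, ← intervalIntegral.integral_add
      (intervalIntegrable_slice hw_sq 0 L t) (intervalIntegrable_slice hw₂_sq 0 L t)]
  refine intervalIntegral.integral_mono_on hL
    (intervalIntegrable_slice (continuous_const.mul (hw.continuous.mul hw₂.continuous).neg) 0 L t)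
    (intervalIntegrable_slice (hw_sq.add hw₂_sq) 0 L t) fun x _ => ?_
  linarith [sq_nonneg (w (x, t) + (pdx^[2] w) (x, t))]

theorem hasDerivAt_energy (hw : ContDiff ℝ ∞ w) (hwL : Periodic w (L, 0)) (t : ℝ) :
    HasDerivAt (energy L w)
      (2 * ((∫ x in 0..L, w (x, t) * pdt w (x, t))
        + ∫ x in 0..L, (pdx^[4] w) (x, t) * pdt w (x, t))) t := by
  have hw₂ := contDiff_iterate_pdx hw 2
  have hwt : ContDiff ℝ ∞ (pdt w) := contDiff_pdt hw le_rfl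
  have hparts : ∫ x in 0..L, (pdx^[2] w) (x, t) * pdt (pdx^[2] w) (x, t)
      = ∫ x in 0..L, (pdx^[4] w) (x, t) * pdt w (x, t) := by
    rw [pdt_iterate_pdx hw, integral_mul_iterate_pdx hw₂ hwt (periodic_iterate_pdx hwL 2)
      (periodic_pdt hwL) 2, neg_one_sq, one_mul, ← iterate_add_apply]
  exact ((hasDerivAt_integral_sq_slice (hw.of_le ENat.LEInfty.out) 0 L t).add
    (hasDerivAt_integral_sq_slice (hw₂.of_le ENat.LEInfty.out) 0 L t)).congr_deriv
    (by rw [hparts, mul_add])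

theorem hasDerivAt_energy_of_pdt_eq_pdx {t : ℝ} (hw : ContDiff ℝ ∞ w) (hF : ContDiff ℝ 1 F)
    (hwL : Periodic w (L, 0)) (hFL : Periodic F (L, 0))
    (hwF : ∀ x, pdt w (x, t) = pdx F (x, t)) :
    HasDerivAt (energy L w)
      (2 * ∫ x in 0..L, -(pdx w (x, t) + (pdx^[5] w) (x, t)) * F (x, t)) t := by
  have hw₁F : Continuous fun q => pdx w q * F q :=
    (contDiff_pdx (m := ∞) hw le_rfl).continuous.mul hF.continuous
  have hw₅F : Continuous fun q => (pdx^[5] w) q * F q :=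
    (contDiff_iterate_pdx hw 5).continuous.mul hF.continuous
  have hparts₀ := integral_mul_pdx (hw.of_le ENat.LEInfty.out) hF hwL hFL t
  have hparts₄ := integral_mul_pdx ((contDiff_iterate_pdx hw 4).of_le ENat.LEInfty.out) hF
    (periodic_iterate_pdx hwL 4) hFL t
  refine (hasDerivAt_energy hw hwL t).congr_deriv (congrArg (2 * ·) ?_)
  simp only [hwF, hparts₀, hparts₄, ← iterate_succ_apply' pdx 4]
  simp only [neg_mul, add_mul, intervalIntegral.integral_neg]
  rw [intervalIntegral.integral_add (intervalIntegrable_slice hw₁F 0 L t)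
    (intervalIntegrable_slice hw₅F 0 L t), neg_add]

theorem two_mul_integral_flux_le_energy {t M : ℝ} (hL : 0 ≤ L) (hw : ContDiff ℝ ∞ w)
    (hF : Continuous F) (hwL : Periodic w (L, 0)) (hM : 0 ≤ M)
    (hFM : ∀ x ∈ Icc 0 L, -(pdx w (x, t) + (pdx^[5] w) (x, t)) * F (x, t)
      ≤ M * (w (x, t) ^ 2 + pdx w (x, t) ^ 2)) :
    2 * ∫ x in 0..L, -(pdx w (x, t) + (pdx^[5] w) (x, t)) * F (x, t)
      ≤ 3 * M * energy L w t := by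
  have hw₁ : ContDiff ℝ ∞ (pdx w) := contDiff_pdx hw le_rfl
  have hw₅ := contDiff_iterate_pdx hw 5
  have hw_sq : Continuous fun q => w q ^ 2 := hw.continuous.pow 2
  have hw₁_sq : Continuous fun q => pdx w q ^ 2 := hw₁.continuous.pow 2
  have hle : ∫ x in 0..L, -(pdx w (x, t) + (pdx^[5] w) (x, t)) * F (x, t)
      ≤ M * ((∫ x in 0..L, w (x, t) ^ 2) + ∫ x in 0..L, pdx w (x, t) ^ 2) := by
    rw [← intervalIntegral.integral_add (intervalIntegrable_slice hw_sq 0 L t)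
      (intervalIntegrable_slice hw₁_sq 0 L t), ← intervalIntegral.integral_const_mul]
    exact intervalIntegral.integral_mono_on hL
      (intervalIntegrable_slice ((hw₁.continuous.add hw₅.continuous).neg.mul hF) 0 L t)
      (intervalIntegrable_slice (continuous_const.mul (hw_sq.add hw₁_sq)) 0 L t) hFM
  have hw_le := mul_le_mul_of_nonneg_left (integral_sq_le_energy (w := w) hL t) hM
  have hw₁_le := mul_le_mul_of_nonneg_left (two_mul_integral_pdx_sq_le_energy hL hw hwL t) hM
  linarith

end Energy

section LinearUniqueness

theorem neg_mul_flux_le {a : ℝ} (ha : 0 < a) (k u p r : ℝ) :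
    -(p + r) * (a * r + k * u) ≤ k ^ 2 / (2 * a) * u ^ 2 + a / 2 * p ^ 2 := by
  have hsq : k ^ 2 / (2 * a) * u ^ 2 + a / 2 * p ^ 2 + (p + r) * (a * r + k * u)
      = ((a * (p + r) + (a * r + k * u)) ^ 2 + (a * p + k * u) ^ 2) / (4 * a) := by
    field_simp
    ring
  have hnonneg : 0 ≤ ((a * (p + r) + (a * r + k * u)) ^ 2 + (a * p + k * u) ^ 2) / (4 * a) := by
    positivity
  linarith

theorem exists_neg_mul_flux_le {X : Type*} [TopologicalSpace X] {S : Set X} {a k : X → ℝ}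
    (hS : IsCompact S) (ha : ContinuousOn a S) (hk : ContinuousOn k S) (ha_pos : ∀ q ∈ S, 0 < a q) :
    ∃ M, 0 ≤ M ∧ ∀ q ∈ S, ∀ u p r : ℝ,
      -(p + r) * (a q * r + k q * u) ≤ M * (u ^ 2 + p ^ 2) := by
  have hcoef : ContinuousOn (fun q => k q ^ 2 / (2 * a q) + a q / 2) S :=
    ((hk.pow 2).div (continuousOn_const.mul ha) fun q hq =>
      (mul_pos two_pos (ha_pos q hq)).ne').add (ha.div_const 2)
  obtain ⟨M, hM⟩ := hS.bddAbove_image hcoef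
  refine ⟨max M 0, le_max_right _ _, fun q hq u p r => ?_⟩
  have ha_q := ha_pos q hq
  have hM_q : k q ^ 2 / (2 * a q) + a q / 2 ≤ max M 0 :=
    (hM (mem_image_of_mem _ hq)).trans (le_max_left _ _)
  have hk_nonneg : 0 ≤ k q ^ 2 / (2 * a q) := by positivity
  calc -(p + r) * (a q * r + k q * u)
      ≤ k q ^ 2 / (2 * a q) * u ^ 2 + a q / 2 * p ^ 2 := neg_mul_flux_le ha_q _ _ _ _
    _ ≤ max M 0 * u ^ 2 + max M 0 * p ^ 2 := by gcongr <;> linarith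
    _ = max M 0 * (u ^ 2 + p ^ 2) := by ring

theorem eq_zero_of_linear_sixth_order {w a k F : ℝ × ℝ → ℝ} {L T : ℝ} (hL : 0 < L)
    (hw : ContDiff ℝ ∞ w) (hwL : Periodic w (L, 0)) (hF : ContDiff ℝ 1 F)
    (hFL : Periodic F (L, 0)) (ha : ContinuousOn a (Icc 0 L ×ˢ Icc 0 T))
    (hk : ContinuousOn k (Icc 0 L ×ˢ Icc 0 T))
    (ha_pos : ∀ q ∈ Icc 0 L ×ˢ Icc 0 T, 0 < a q)
    (hF_eq : ∀ q, F q = a q * (pdx^[5] w) q + k q * w q)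
    (hpde : ∀ x, ∀ t ∈ Ioo 0 T, pdt w (x, t) = pdx F (x, t)) (hinit : ∀ x, w (x, 0) = 0) :
    ∀ x, ∀ t ∈ Icc 0 T, w (x, t) = 0 := by
  obtain ⟨M, hM, hflux⟩ := exists_neg_mul_flux_le (isCompact_Icc.prod isCompact_Icc) ha hk ha_pos
  have henergy : ∀ t ∈ Icc 0 T, energy L w t ≤ 0 :=
    nonpos_of_hasDerivAt_le_mul
      (fun t _ => (hasDerivAt_energy hw hwL t).continuousAt.continuousWithinAt)
      (fun t ht => hasDerivAt_energy_of_pdt_eq_pdx hw hF hwL hFL (hpde · t ht))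
      (fun t ht => two_mul_integral_flux_le_energy hL.le hw hF.continuous hwL hM fun x hx => by
        rw [hF_eq]
        exact hflux (x, t) ⟨hx, Ioo_subset_Icc_self ht⟩ _ _ _)
      (energy_eq_zero_of_slice hw hinit).le
  exact fun x t ht => eq_zero_of_energy_nonpos hL hw.continuous hwL (henergy t ht) x

end LinearUniqueness

section ThinFilm

/-- The flux `hⁿ (b ∂ₓ⁵h - Φ)` of the sixth-order thin-film equation `∂ₜh = ∂ₓ(hⁿ (b ∂ₓ⁵h - Φ))`
with power-law mobility `hⁿ`, bending coefficient `b` and external potential `Φ`. -/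
def thinFilmFlux (n : ℕ) (b : ℝ) (Φ h : ℝ × ℝ → ℝ) : ℝ × ℝ → ℝ :=
  fun q => h q ^ n * (b * (pdx^[5] h) q - Φ q)

/-- The zeroth-order coefficient of the equation satisfied by `h₁ - h₂`, with the difference
quotient of the mobility written as a geometric sum so that it is continuous where `h₁ = h₂`. -/
def fluxDifferenceCoeff (n : ℕ) (b : ℝ) (Φ h₁ h₂ : ℝ × ℝ → ℝ) : ℝ × ℝ → ℝ :=
  fun q => (∑ i ∈ Finset.range n, h₁ q ^ i * h₂ q ^ (n - 1 - i)) * (b * (pdx^[5] h₂) q - Φ q)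

variable {n : ℕ} {b L : ℝ} {Φ h h₁ h₂ : ℝ × ℝ → ℝ}

theorem contDiff_thinFilmFlux (hΦ : ContDiff ℝ ∞ Φ) (hh : ContDiff ℝ ∞ h) :
    ContDiff ℝ ∞ (thinFilmFlux n b Φ h) :=
  (hh.pow n).mul ((contDiff_const.mul (contDiff_iterate_pdx hh 5)).sub hΦ)

theorem periodic_thinFilmFlux {c : ℝ × ℝ} (hΦ : Periodic Φ c) (hh : Periodic h c) :
    Periodic (thinFilmFlux n b Φ h) c := fun q => by
  simp only [thinFilmFlux, hh q, hΦ q, periodic_iterate_pdx hh 5 q]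

theorem continuous_fluxDifferenceCoeff (hΦ : Continuous Φ) (hh₁ : Continuous h₁)
    (hh₂ : ContDiff ℝ ∞ h₂) : Continuous (fluxDifferenceCoeff n b Φ h₁ h₂) := by
  have hh₂_cont := hh₂.continuous
  have hh₂_pdx := (contDiff_iterate_pdx hh₂ 5).continuous
  unfold fluxDifferenceCoeff
  fun_prop

theorem thinFilmFlux_sub (hh₁ : ContDiff ℝ ∞ h₁) (hh₂ : ContDiff ℝ ∞ h₂) (q : ℝ × ℝ) :
    thinFilmFlux n b Φ h₁ q - thinFilmFlux n b Φ h₂ q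
      = b * h₁ q ^ n * (pdx^[5] (h₁ - h₂)) q
        + fluxDifferenceCoeff n b Φ h₁ h₂ q * (h₁ - h₂) q := by
  have hgeom := geom_sum₂_mul (h₁ q) (h₂ q) n
  simp only [thinFilmFlux, fluxDifferenceCoeff, iterate_pdx_sub hh₁ hh₂, Pi.sub_apply]
  linear_combination -(b * (pdx^[5] h₂) q - Φ q) * hgeom

theorem stmt_17_general {T : ℝ} (hb : 0 < b) (hL : 0 < L) (hΦ : ContDiff ℝ ∞ Φ)
    (hΦL : Periodic Φ (L, 0)) (hh₁ : ContDiff ℝ ∞ h₁) (hh₂ : ContDiff ℝ ∞ h₂)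
    (hh₁L : Periodic h₁ (L, 0)) (hh₂L : Periodic h₂ (L, 0))
    (hpos : ∀ x, ∀ t ∈ Icc 0 T, 0 < h₁ (x, t))
    (hpde₁ : ∀ x, ∀ t ∈ Ioo 0 T, pdt h₁ (x, t) = pdx (thinFilmFlux n b Φ h₁) (x, t))
    (hpde₂ : ∀ x, ∀ t ∈ Ioo 0 T, pdt h₂ (x, t) = pdx (thinFilmFlux n b Φ h₂) (x, t))
    (hinit : ∀ x, h₁ (x, 0) = h₂ (x, 0)) :
    ∀ x, ∀ t ∈ Icc 0 T, h₁ (x, t) = h₂ (x, t) := by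
  have hF₁ : ContDiff ℝ ∞ (thinFilmFlux n b Φ h₁) := contDiff_thinFilmFlux hΦ hh₁
  have hF₂ : ContDiff ℝ ∞ (thinFilmFlux n b Φ h₂) := contDiff_thinFilmFlux hΦ hh₂
  have hlinear : ∀ x, ∀ t ∈ Ioo 0 T, pdt (h₁ - h₂) (x, t)
      = pdx (thinFilmFlux n b Φ h₁ - thinFilmFlux n b Φ h₂) (x, t) := fun x t ht => by
    rw [pdt_sub (hh₁.differentiable (by simp)) (hh₂.differentiable (by simp)),
      pdx_sub (hF₁.differentiable (by simp)) (hF₂.differentiable (by simp)),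
      Pi.sub_apply, Pi.sub_apply, hpde₁ x t ht, hpde₂ x t ht]
  have hdiff := eq_zero_of_linear_sixth_order hL (hh₁.sub hh₂) (hh₁L.sub hh₂L)
    ((hF₁.sub hF₂).of_le ENat.LEInfty.out)
    ((periodic_thinFilmFlux hΦL hh₁L).sub (periodic_thinFilmFlux hΦL hh₂L))
    (continuous_const.mul (hh₁.continuous.pow n)).continuousOn
    (continuous_fluxDifferenceCoeff hΦ.continuous hh₁.continuous hh₂).continuousOn
    (fun q hq => mul_pos hb (pow_pos (hpos q.1 q.2 hq.2) n))
    (thinFilmFlux_sub hh₁ hh₂) hlinear (fun x => sub_eq_zero.2 (hinit x))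
  exact fun x t ht => sub_eq_zero.1 (hdiff x t ht)

end ThinFilm

/-- uniqueness of strictly positive classical solutions of the
sixth-order thin-film equation, part of the Proposition in Section 4.3.
If `h₁, h₂` are smooth, 1-periodic in `x`, bounded below by positive constants, both
solve `∂ₜh = ∂ₓ(h³((β/12)∂ₓ⁵h − Φ))` on `ℝ×(0,T)`, and have the same initial data,
then `h₁ = h₂` on `ℝ×[0,T]`. -/
theorem stmt_17 (β T : ℝ) (hβ : 0 < β) (hT : 0 < T)
    (Φ : ℝ × ℝ → ℝ) (hΦ : ContDiff ℝ (⊤ : ℕ∞) Φ) (hΦper : ∀ x t, Φ (x + 1, t) = Φ (x, t))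
    (h1 h2 : ℝ × ℝ → ℝ) (h1sm : ContDiff ℝ (⊤ : ℕ∞) h1) (h2sm : ContDiff ℝ (⊤ : ℕ∞) h2)
    (h1per : ∀ x t, h1 (x + 1, t) = h1 (x, t)) (h2per : ∀ x t, h2 (x + 1, t) = h2 (x, t))
    (c1 c2 : ℝ) (hc1 : 0 < c1) (hc2 : 0 < c2)
    (h1lb : ∀ x t : ℝ, t ∈ Icc (0:ℝ) T → c1 ≤ h1 (x, t))
    (h2lb : ∀ x t : ℝ, t ∈ Icc (0:ℝ) T → c2 ≤ h2 (x, t))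
    (hpde1 : ∀ x : ℝ, ∀ t ∈ Ioo (0:ℝ) T,
      pdt h1 (x, t)
        = pdx (fun q => (h1 q) ^ 3 * (β / 12 * (pdx^[5] h1) q - Φ q)) (x, t))
    (hpde2 : ∀ x : ℝ, ∀ t ∈ Ioo (0:ℝ) T,
      pdt h2 (x, t)
        = pdx (fun q => (h2 q) ^ 3 * (β / 12 * (pdx^[5] h2) q - Φ q)) (x, t))
    (hinit : ∀ x : ℝ, h1 (x, 0) = h2 (x, 0)) :
    ∀ x : ℝ, ∀ t ∈ Icc (0:ℝ) T, h1 (x, t) = h2 (x, t) := by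
  have hperiodic {f : ℝ × ℝ → ℝ} (hf : ∀ x t, f (x + 1, t) = f (x, t)) : Periodic f (1, 0) :=
    fun ⟨x, t⟩ => by simpa using hf x t
  exact stmt_17_general (n := 3) (by positivity) one_pos hΦ (hperiodic hΦper) h1sm h2sm
    (hperiodic h1per) (hperiodic h2per) (fun x t ht => hc1.trans_le (h1lb x t ht))
    hpde1 hpde2 hinit

end
end

section
/- There is an absolute constant C > 0 with the following property. Let M ≥ 1, T > 0, and let h, J : ℝ×[0,T] → ℝ be C¹ and 1-periodic in x, with ∂_t h = ∂ₓJ on ℝ×(0,T), |h(x,t)| ≤ M and |∂ₓh(x,t)| ≤ M for all (x,t), and ∫₀ᵀ ∫₀¹ J(x,t)² dx dt ≤ M². Then h is uniformly Hölder continuous in time with exponent 1/5: |h(x,t) − h(x,s)| ≤ C·M·|t − s|^{1/5} for all x ∈ ℝ and all s, t ∈ [0,T]. -/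
open MeasureTheory Set intervalIntegral

/-!
Put `K(x) = ∫ₛᵗ J(x,u) du`. Integrating the equation in time, `K' = h(·,t) − h(·,s)`, which is
`2L`-Lipschitz when `|∂ₓh| ≤ L`, while Cauchy–Schwarz bounds `∫ K²` over a period by
`(t − s) ∬ J²`. It remains to interpolate: `‖K'‖_∞⁵ ≤ 64 Λ³ ∫ K²` if `K` is periodic and `K'` is
`Λ`-Lipschitz. Indeed `K'` stays so close to `K'(x)` on the window of radius `r = |K'(x)| / (2Λ)`
around `x` that `K` changes by at least `r |K'(x)| / 2` over each subinterval of length `r`, so `K`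
cannot be small in the mean there; and the window fits into a period because `K'` has mean zero.
-/

open Function Metric
open scoped NNReal

section Interpolation

variable {E : Type*} [NormedAddCommGroup E] [NormedSpace ℝ E]
  {f f' : ℝ → E} {Λ : ℝ≥0} {P r x y z : ℝ}

lemma norm_sub_sub_smul_deriv_le_of_lipschitz (hf : ∀ y, HasDerivAt f (f' y) y)
    (hf' : LipschitzWith Λ f') (hy : y ∈ closedBall x r) (hz : z ∈ closedBall x r) :
    ‖f z - f y - (z - y) • f' x‖ ≤ Λ * r * |z - y| := by
  have hderiv (w : ℝ) : HasDerivAt (fun w => f w - w • f' x) (f' w - f' x) w := by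
    simpa using (hf w).fun_sub ((hasDerivAt_id w).smul_const (f' x))
  have hbound (w : ℝ) (hw : w ∈ closedBall x r) : ‖f' w - f' x‖ ≤ Λ * r :=
    dist_eq_norm (f' w) (f' x) ▸ hf'.dist_le_mul_of_le hw
  have hmvt := (convex_closedBall x r).norm_image_sub_le_of_norm_hasDerivWithin_le
    (fun w _ => (hderiv w).hasDerivWithinAt) hbound hy hz
  rwa [sub_sub_sub_comm, ← sub_smul] at hmvt

lemma mul_norm_deriv_le_norm_add_norm (hf : ∀ y, HasDerivAt f (f' y) y)
    (hf' : LipschitzWith Λ f') (hr : 0 ≤ r) (hrx : 2 * Λ * r ≤ ‖f' x‖)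
    (hy : y ∈ Icc (x - r) x) :
    r * ‖f' x‖ / 2 ≤ ‖f (y + r)‖ + ‖f y‖ := by
  have hy_ball : y ∈ closedBall x r := by
    rw [Real.closedBall_eq_Icc]; constructor <;> linarith [hy.1, hy.2]
  have hyr_ball : y + r ∈ closedBall x r := by
    rw [Real.closedBall_eq_Icc]; constructor <;> linarith [hy.1, hy.2]
  have htaylor := norm_sub_sub_smul_deriv_le_of_lipschitz hf hf' hy_ball hyr_ball
  rw [add_sub_cancel_left, abs_of_nonneg hr] at htaylor
  have hlinear : ‖r • f' x‖ = r * ‖f' x‖ := by rw [norm_smul, Real.norm_of_nonneg hr]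
  have herror : Λ * r * r ≤ r * ‖f' x‖ / 2 := by
    linarith [mul_le_mul_of_nonneg_left hrx hr]
  linarith [norm_sub_norm_le (r • f' x) (f (y + r) - f y),
    norm_sub_rev (r • f' x) (f (y + r) - f y), norm_sub_le (f (y + r)) (f y)]

lemma pow_three_mul_norm_deriv_sq_le_integral (hf : ∀ y, HasDerivAt f (f' y) y)
    (hf' : LipschitzWith Λ f') (hr : 0 ≤ r) (hrx : 2 * Λ * r ≤ ‖f' x‖) :
    r ^ 3 * ‖f' x‖ ^ 2 ≤ 8 * ∫ y in (x - r)..(x + r), ‖f y‖ ^ 2 := by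
  have hf_cont : Continuous f := continuous_iff_continuousAt.2 fun y => (hf y).continuousAt
  have hint (a b : ℝ) : IntervalIntegrable (fun y => ‖f y‖ ^ 2) volume a b :=
    (hf_cont.norm.pow 2).intervalIntegrable a b
  have hint_shift : IntervalIntegrable (fun y => ‖f (y + r)‖ ^ 2) volume (x - r) x :=
    Continuous.intervalIntegrable (by fun_prop) _ _
  have hpointwise (y : ℝ) (hy : y ∈ Icc (x - r) x) :
      (r * ‖f' x‖ / 2) ^ 2 ≤ 2 * (‖f (y + r)‖ ^ 2 + ‖f y‖ ^ 2) := calc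
    (r * ‖f' x‖ / 2) ^ 2 ≤ (‖f (y + r)‖ + ‖f y‖) ^ 2 := by
      gcongr
      exact mul_norm_deriv_le_norm_add_norm hf hf' hr hrx hy
    _ ≤ 2 * (‖f (y + r)‖ ^ 2 + ‖f y‖ ^ 2) := add_sq_le
  have hmean : r * (r * ‖f' x‖ / 2) ^ 2 ≤ 2 * ∫ y in (x - r)..(x + r), ‖f y‖ ^ 2 := calc
    r * (r * ‖f' x‖ / 2) ^ 2 = ∫ _ in (x - r)..x, (r * ‖f' x‖ / 2) ^ 2 := by simp
    _ ≤ ∫ y in (x - r)..x, 2 * (‖f (y + r)‖ ^ 2 + ‖f y‖ ^ 2) :=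
      integral_mono_on (by linarith) intervalIntegrable_const
        ((hint_shift.add (hint _ _)).const_mul 2) hpointwise
    _ = 2 * ∫ y in (x - r)..(x + r), ‖f y‖ ^ 2 := by
      rw [intervalIntegral.integral_const_mul, integral_add hint_shift (hint _ _),
        integral_comp_add_right (fun y => ‖f y‖ ^ 2), sub_add_cancel, add_comm,
        integral_add_adjacent_intervals (hint _ _) (hint _ _)]
  linear_combination 4 * hmean

lemma norm_deriv_le_mul_of_periodic (hf : ∀ y, HasDerivAt f (f' y) y)
    (hf' : LipschitzWith Λ f') (hP : 0 < P) (hper : Periodic f P) : ‖f' x‖ ≤ Λ * P := by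
  have hmvt := norm_sub_sub_smul_deriv_le_of_lipschitz (x := x) (y := x) (z := x + P) (r := P)
    hf hf' (by simp [hP.le]) (by simp [abs_of_pos hP])
  rw [hper x, sub_self, zero_sub, norm_neg, add_sub_cancel_left, norm_smul, Real.norm_eq_abs,
    mul_comm] at hmvt
  exact le_of_mul_le_mul_right hmvt (abs_pos.2 hP.ne')

theorem norm_deriv_pow_five_le_of_periodic (hf : ∀ y, HasDerivAt f (f' y) y)
    (hf' : LipschitzWith Λ f') (hP : 0 < P) (hper : Periodic f P) (x : ℝ) :
    ‖f' x‖ ^ 5 ≤ 64 * Λ ^ 3 * ∫ y in (0 : ℝ)..P, ‖f y‖ ^ 2 := by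
  have hsize : ‖f' x‖ ≤ Λ * P := norm_deriv_le_mul_of_periodic hf hf' hP hper
  rcases eq_zero_or_pos Λ with rfl | hΛ
  · have hzero : f' x = 0 := by simpa using hsize
    simp [hzero]
  obtain ⟨r, hrx⟩ : ∃ r : ℝ, ‖f' x‖ = 2 * Λ * r := ⟨‖f' x‖ / (2 * Λ), by field_simp⟩
  have hΛ' : (0 : ℝ) < Λ := hΛ
  have hr : 0 ≤ r := nonneg_of_mul_nonneg_right (hrx ▸ norm_nonneg (f' x)) (by positivity)
  have hrP : x + r ≤ x - r + P := by
    have : 2 * r ≤ P := le_of_mul_le_mul_left (by linarith) hΛ'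
    linarith
  have hf_cont : Continuous f := continuous_iff_continuousAt.2 fun y => (hf y).continuousAt
  have hwindow : ∫ y in (x - r)..(x + r), ‖f y‖ ^ 2 ≤ ∫ y in (0 : ℝ)..P, ‖f y‖ ^ 2 := calc
    ∫ y in (x - r)..(x + r), ‖f y‖ ^ 2 ≤ ∫ y in (x - r)..(x - r + P), ‖f y‖ ^ 2 :=
      integral_mono_interval le_rfl (by linarith) hrP (ae_of_all _ fun y => sq_nonneg ‖f y‖)
        ((hf_cont.norm.pow 2).intervalIntegrable _ _)
    _ = ∫ y in (0 : ℝ)..P, ‖f y‖ ^ 2 := by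
      simpa using (hper.comp fun v => ‖v‖ ^ 2).intervalIntegral_add_eq (x - r) 0
  calc ‖f' x‖ ^ 5 = 8 * Λ ^ 3 * (r ^ 3 * ‖f' x‖ ^ 2) := by rw [hrx]; ring
    _ ≤ 8 * Λ ^ 3 * (8 * ∫ y in (0 : ℝ)..P, ‖f y‖ ^ 2) := by
      refine mul_le_mul_of_nonneg_left ?_ (by positivity)
      exact (pow_three_mul_norm_deriv_sq_le_integral hf hf' hr hrx.ge).trans (by gcongr)
    _ = 64 * Λ ^ 3 * ∫ y in (0 : ℝ)..P, ‖f y‖ ^ 2 := by ring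

end Interpolation

section TwoVariables

variable {E : Type*} [NormedAddCommGroup E] {f : ℝ × ℝ → E} {a b a' b' c d x t : ℝ}

lemma integral_integral_norm_sq_mono (hf : Continuous f) (hab : a ≤ b) (hc : a' ≤ c)
    (hcd : c ≤ d) (hd : d ≤ b') :
    ∫ u in c..d, ∫ x in a..b, ‖f (x, u)‖ ^ 2 ≤ ∫ u in a'..b', ∫ x in a..b, ‖f (x, u)‖ ^ 2 :=
  integral_mono_interval hc hcd hd
    (ae_of_all _ fun _ => integral_nonneg hab fun _ _ => sq_nonneg _)
    (Continuous.intervalIntegrable (by fun_prop) _ _)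

variable [NormedSpace ℝ E]

lemma integral_integral_swap_of_continuousOn (hf : ContinuousOn f (uIcc a b ×ˢ uIcc c d)) :
    ∫ x in a..b, ∫ y in c..d, f (x, y) = ∫ y in c..d, ∫ x in a..b, f (x, y) :=
  intervalIntegral_intervalIntegral_swap (F := fun x y => f (x, y)) <|
    (hf.integrableOn_compact (isCompact_uIcc.prod isCompact_uIcc)).mono_set
      (prod_mono uIoc_subset_uIcc uIoc_subset_uIcc)

lemma hasDerivAt_slice_fst (hf : DifferentiableAt ℝ f (x, t)) :
    HasDerivAt (fun y => f (y, t)) (fderiv ℝ f (x, t) (1, 0)) x :=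
  hf.hasFDerivAt.comp_hasDerivAt x ((hasDerivAt_id x).prodMk (hasDerivAt_const x t))

lemma lipschitzWith_slice_fst {L : ℝ≥0} (hf : Differentiable ℝ f)
    (hL : ∀ y, ‖fderiv ℝ f (y, t) (1, 0)‖ ≤ L) : LipschitzWith L fun y => f (y, t) :=
  lipschitzWith_of_nnnorm_deriv_le
    (fun y => (hasDerivAt_slice_fst (hf (y, t))).differentiableAt)
    fun y => (hasDerivAt_slice_fst (hf (y, t))).deriv ▸ hL y

lemma hasDerivAt_slice_snd (hf : DifferentiableAt ℝ f (x, t)) :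
    HasDerivAt (fun u => f (x, u)) (fderiv ℝ f (x, t) (0, 1)) t :=
  hf.hasFDerivAt.comp_hasDerivAt t ((hasDerivAt_const t x).prodMk (hasDerivAt_id t))

variable [CompleteSpace E]

lemma norm_integral_pow_le {g : ℝ → E} {n : ℕ} (hab : a ≤ b)
    (hg : IntervalIntegrable g volume a b)
    (hgn : IntervalIntegrable (fun u => ‖g u‖ ^ (n + 1)) volume a b) :
    ‖∫ u in a..b, g u‖ ^ (n + 1) ≤ (b - a) ^ n * ∫ u in a..b, ‖g u‖ ^ (n + 1) := by
  rcases hab.eq_or_lt with rfl | hab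
  · simp
  have hconvex : ConvexOn ℝ univ fun v : E => ‖v‖ ^ (n + 1) :=
    (convexOn_norm convex_univ).pow (fun v _ => norm_nonneg v) (n + 1)
  have hjensen : ‖⨍ u in a..b, g u‖ ^ (n + 1) ≤ ⨍ u in a..b, ‖g u‖ ^ (n + 1) := by
    rw [uIoc_of_le hab.le]
    exact hconvex.map_set_average_le (by fun_prop) isClosed_univ (by simp [hab]) (by simp)
      (by simp) hg.1 hgn.1
  have hba : 0 < b - a := sub_pos.2 hab
  rw [interval_average_eq, interval_average_eq, norm_smul, Real.norm_of_nonneg (by positivity),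
    mul_pow, inv_pow, smul_eq_mul, inv_mul_le_iff₀ (by positivity)] at hjensen
  calc ‖∫ u in a..b, g u‖ ^ (n + 1)
      ≤ (b - a) ^ (n + 1) * ((b - a)⁻¹ * ∫ u in a..b, ‖g u‖ ^ (n + 1)) := hjensen
    _ = (b - a) ^ n * ∫ u in a..b, ‖g u‖ ^ (n + 1) := by field_simp; ring

lemma hasDerivAt_integral_of_contDiff (hf : ContDiff ℝ 1 f) (x : ℝ) :
    HasDerivAt (fun y => ∫ u in a..b, f (y, u)) (∫ u in a..b, fderiv ℝ f (x, u) (1, 0)) x := by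
  have hf_diff : Differentiable ℝ f := hf.differentiable one_ne_zero
  have hf_cont : Continuous f := hf.continuous
  have hpartial_cont : Continuous fun p => fderiv ℝ f p (1, 0) :=
    (hf.continuous_fderiv one_ne_zero).clm_apply continuous_const
  have hintegral_cont : Continuous fun y => ∫ u in a..b, fderiv ℝ f (y, u) (1, 0) :=
    continuous_parametric_intervalIntegral_of_continuous'
      (f := fun y u => fderiv ℝ f (y, u) (1, 0)) hpartial_cont a b
  have hprimitive (y : ℝ) : ∫ u in a..b, f (y, u) =
      (∫ z in x..y, ∫ u in a..b, fderiv ℝ f (z, u) (1, 0)) + ∫ u in a..b, f (x, u) := by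
    have hftc (u : ℝ) : ∫ z in x..y, fderiv ℝ f (z, u) (1, 0) = f (y, u) - f (x, u) :=
      integral_eq_sub_of_hasDerivAt (f := fun z => f (z, u))
        (fun z _ => hasDerivAt_slice_fst (hf_diff (z, u)))
        ((hpartial_cont.comp (Continuous.prodMk_left u)).intervalIntegrable x y)
    rw [integral_integral_swap_of_continuousOn hpartial_cont.continuousOn]
    simp_rw [hftc]
    rw [intervalIntegral.integral_sub, sub_add_cancel] <;>
      exact Continuous.intervalIntegrable (by fun_prop) _ _
  rw [funext hprimitive]
  exact (hintegral_cont.integral_hasStrictDerivAt x x).hasDerivAt.add_const _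

lemma integral_norm_integral_sq_le (hf : Continuous f) (hab : a ≤ b) (hcd : c ≤ d) :
    ∫ x in a..b, ‖∫ u in c..d, f (x, u)‖ ^ 2 ≤
      (d - c) * ∫ u in c..d, ∫ x in a..b, ‖f (x, u)‖ ^ 2 := by
  have hsq_cont : Continuous fun p => ‖f p‖ ^ 2 := by fun_prop
  have hcauchy (x : ℝ) : ‖∫ u in c..d, f (x, u)‖ ^ 2 ≤ (d - c) * ∫ u in c..d, ‖f (x, u)‖ ^ 2 := by
    simpa using norm_integral_pow_le (n := 1) hcd
      (Continuous.intervalIntegrable (by fun_prop) _ _)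
      (Continuous.intervalIntegrable (by fun_prop) _ _)
  rw [← integral_integral_swap_of_continuousOn hsq_cont.continuousOn,
    ← intervalIntegral.integral_const_mul]
  exact integral_mono_on hab (Continuous.intervalIntegrable (by fun_prop) _ _)
    (Continuous.intervalIntegrable (by fun_prop) _ _) fun x _ => hcauchy x

end TwoVariables

lemma le_mul_rpow_inv_of_pow_le {A B C : ℝ} {n : ℕ} (hn : n ≠ 0) (hB : 0 ≤ B) (hC : 0 ≤ C)
    (h : A ^ n ≤ C ^ n * B) : A ≤ C * B ^ (n⁻¹ : ℝ) := by
  refine le_of_pow_le_pow_left₀ hn (by positivity) ?_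
  rwa [mul_pow, Real.rpow_inv_natCast_pow hB hn]

section ConservationLaw

variable {E : Type*} [NormedAddCommGroup E] [NormedSpace ℝ E] [CompleteSpace E]
  {h J : ℝ × ℝ → E} {P Q T s t : ℝ}

lemma hasDerivAt_integral_flux (hh : ∀ x, ContinuousOn (fun u => h (x, u)) (Icc s t))
    (hJ : ContDiff ℝ 1 J)
    (hpde : ∀ x, ∀ u ∈ Ioo s t, HasDerivAt (fun u => h (x, u)) (fderiv ℝ J (x, u) (1, 0)) u)
    (hst : s ≤ t) (x : ℝ) :
    HasDerivAt (fun y => ∫ u in s..t, J (y, u)) (h (x, t) - h (x, s)) x := by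
  have hpartial_cont : Continuous fun u => fderiv ℝ J (x, u) (1, 0) :=
    ((hJ.continuous_fderiv one_ne_zero).comp (Continuous.prodMk_right x)).clm_apply
      continuous_const
  rw [← integral_eq_sub_of_hasDerivAt_of_le hst (hh x) (hpde x)
    (hpartial_cont.intervalIntegrable s t)]
  exact hasDerivAt_integral_of_contDiff hJ x

theorem norm_sub_pow_five_le_of_flux {L : ℝ≥0}
    (hh : ∀ x, ContinuousOn (fun u => h (x, u)) (Icc s t)) (hJ : ContDiff ℝ 1 J)
    (hpde : ∀ x, ∀ u ∈ Ioo s t, HasDerivAt (fun u => h (x, u)) (fderiv ℝ J (x, u) (1, 0)) u)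
    (hst : s ≤ t) (hLs : LipschitzWith L fun y => h (y, s))
    (hLt : LipschitzWith L fun y => h (y, t)) (hP : 0 < P)
    (hper : ∀ x u, J (x + P, u) = J (x, u)) (x : ℝ) :
    ‖h (x, t) - h (x, s)‖ ^ 5 ≤
      512 * L ^ 3 * ((t - s) * ∫ u in s..t, ∫ y in (0 : ℝ)..P, ‖J (y, u)‖ ^ 2) := by
  have hK_per : Periodic (fun y => ∫ u in s..t, J (y, u)) P := fun y => by simp only [hper]
  calc ‖h (x, t) - h (x, s)‖ ^ 5
      ≤ 64 * (L + L : ℝ≥0) ^ 3 * ∫ y in (0 : ℝ)..P, ‖∫ u in s..t, J (y, u)‖ ^ 2 :=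
        norm_deriv_pow_five_le_of_periodic (hasDerivAt_integral_flux hh hJ hpde hst)
          (hLt.sub hLs) hP hK_per x
    _ = 512 * L ^ 3 * ∫ y in (0 : ℝ)..P, ‖∫ u in s..t, J (y, u)‖ ^ 2 := by push_cast; ring
    _ ≤ 512 * L ^ 3 * ((t - s) * ∫ u in s..t, ∫ y in (0 : ℝ)..P, ‖J (y, u)‖ ^ 2) := by
        gcongr
        exact integral_norm_integral_sq_le hJ.continuous hP.le hst

theorem stmt_18_general {L : ℝ} (hh : ContDiff ℝ 1 h) (hJ : ContDiff ℝ 1 J) (hP : 0 < P)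
    (hper : ∀ x t, J (x + P, t) = J (x, t))
    (hpde : ∀ x, ∀ t ∈ Ioo 0 T, fderiv ℝ h (x, t) (0, 1) = fderiv ℝ J (x, t) (1, 0))
    (hL : ∀ x, ∀ t ∈ Icc 0 T, ‖fderiv ℝ h (x, t) (1, 0)‖ ≤ L)
    (hQ : ∫ t in (0 : ℝ)..T, ∫ x in (0 : ℝ)..P, ‖J (x, t)‖ ^ 2 ≤ Q)
    (x : ℝ) (hs : s ∈ Icc 0 T) (ht : t ∈ Icc 0 T) :
    ‖h (x, t) - h (x, s)‖ ≤ 4 * (L ^ 3 * Q * |t - s|) ^ ((1 : ℝ) / 5) := by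
  wlog hst : s ≤ t generalizing s t
  · rw [norm_sub_rev, abs_sub_comm]
    exact this ht hs (le_of_not_ge hst)
  have hh_diff : Differentiable ℝ h := hh.differentiable one_ne_zero
  lift L to ℝ≥0 using (norm_nonneg _).trans (hL x s hs)
  have hlip (u : ℝ) (hu : u ∈ Icc 0 T) : LipschitzWith L fun y => h (y, u) :=
    lipschitzWith_slice_fst hh_diff fun y => hL y u hu
  have hpde' (y u : ℝ) (hu : u ∈ Ioo s t) :
      HasDerivAt (fun u => h (y, u)) (fderiv ℝ J (y, u) (1, 0)) u :=
    hpde y u (Ioo_subset_Ioo hs.1 ht.2 hu) ▸ hasDerivAt_slice_snd (hh_diff (y, u))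
  have hflux := (integral_integral_norm_sq_mono hJ.continuous hP.le hs.1 hst ht.2).trans hQ
  have hflux_nonneg : 0 ≤ ∫ u in s..t, ∫ y in (0 : ℝ)..P, ‖J (y, u)‖ ^ 2 :=
    integral_nonneg hst fun u _ => integral_nonneg hP.le fun y _ => sq_nonneg _
  have hts : 0 ≤ t - s := sub_nonneg.2 hst
  have hQ_nonneg : 0 ≤ Q := hflux_nonneg.trans hflux
  rw [abs_of_nonneg hts]
  suffices hpow : ‖h (x, t) - h (x, s)‖ ^ 5 ≤ 4 ^ 5 * (L ^ 3 * Q * (t - s)) by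
    simpa using le_mul_rpow_inv_of_pow_le (by norm_num) (by positivity) (by norm_num) hpow
  calc ‖h (x, t) - h (x, s)‖ ^ 5
      ≤ 512 * L ^ 3 * ((t - s) * ∫ u in s..t, ∫ y in (0 : ℝ)..P, ‖J (y, u)‖ ^ 2) :=
        norm_sub_pow_five_le_of_flux (fun y => Continuous.continuousOn (by fun_prop)) hJ hpde' hst
          (hlip s hs) (hlip t ht) hP hper x
    _ ≤ 512 * L ^ 3 * ((t - s) * Q) := by gcongr
    _ = 512 * (L ^ 3 * Q * (t - s)) := by ring
    _ ≤ 4 ^ 5 * (L ^ 3 * Q * (t - s)) := by gcongr; norm_num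

end ConservationLaw

/-- uniform Hölder-1/5 continuity in time, part of the Proposition in
Section 4.3. There is an absolute constant `C > 0` such that whenever `M ≥ 1`, `T > 0`,
`h, J` are C¹ and 1-periodic in `x`, `∂ₜh = ∂ₓJ` on `ℝ×(0,T)`, `|h| ≤ M`, `|∂ₓh| ≤ M`
on `ℝ×[0,T]`, and `∫₀ᵀ∫₀¹ J² ≤ M²`, then
`|h(x,t) − h(x,s)| ≤ C·M·|t − s|^{1/5}` for all `x ∈ ℝ` and `s, t ∈ [0,T]`. -/
theorem stmt_18 :
    ∃ C > (0:ℝ), ∀ M T : ℝ, 1 ≤ M → 0 < T →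
      ∀ h J : ℝ × ℝ → ℝ, ContDiff ℝ 1 h → ContDiff ℝ 1 J →
        (∀ x t, h (x + 1, t) = h (x, t)) → (∀ x t, J (x + 1, t) = J (x, t)) →
        (∀ x : ℝ, ∀ t ∈ Ioo (0:ℝ) T, fderiv ℝ h (x, t) (0, 1) = fderiv ℝ J (x, t) (1, 0)) →
        (∀ x : ℝ, ∀ t ∈ Icc (0:ℝ) T, |h (x, t)| ≤ M) →
        (∀ x : ℝ, ∀ t ∈ Icc (0:ℝ) T, |fderiv ℝ h (x, t) (1, 0)| ≤ M) →
        (∫ t in (0:ℝ)..T, ∫ x in (0:ℝ)..1, (J (x, t)) ^ 2) ≤ M ^ 2 →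
        ∀ x : ℝ, ∀ s ∈ Icc (0:ℝ) T, ∀ t ∈ Icc (0:ℝ) T,
          |h (x, t) - h (x, s)| ≤ C * M * |t - s| ^ ((1:ℝ) / 5) := by
  refine ⟨4, by norm_num, fun M T hM _ h J hh hJ _ hper hpde _ hL hQ x s hs t ht => ?_⟩
  have hgen := stmt_18_general hh hJ one_pos hper hpde hL (by simpa using hQ) x hs ht
  have hroot : (M ^ 3 * M ^ 2) ^ ((1 : ℝ) / 5) = M := by
    simpa [← pow_add] using Real.pow_rpow_inv_natCast (zero_le_one.trans hM) (n := 5) (by norm_num)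
  rwa [Real.mul_rpow (by positivity) (abs_nonneg _), hroot, ← mul_assoc] at hgen
end
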